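/- Let n ≥ 2, and work in the polynomial ring ℤ[e_{ij} : 1 ≤ i < j ≤ n], with the convention e_{ji} = e_{ij}. Let L be the n×n matrix with L_{ii} = Σ_{k≠i} e_{ik} and L_{ij} = −e_{ij} for i ≠ j. Then for any r, s ∈ {1,…,n}, Σ_{T ∈ Tree(K_n)} ∏_{{i,j} ∈ T} e_{ij} = (−1)^{r+s} · det L̂, where L̂ is the (n−1)×(n−1) matrix obtained from L by deleting row r and column s. -/

import Mathlib

/-!
Fix a root `r`.  Row `i ≠ r` of the Laplacian with row and column `r` removed is
`∑ k, e_{ik} (δ_i - δ_k)`, where `δ_r` is read as `0`.  Expanding the determinant multilinearly in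
the rows gives `∑ f, (∏ i, e_{i, f i}) det M_f`, where `f` chooses a parent `f i` for every
vertex `i ≠ r` and `M_f` has rows `δ_i - δ_{f i}`.

* If following parents always ends at `r` (`ParentRel r f` is well-founded), then `M_f` is
  unitriangular for the ordering by rank, so `det M_f = 1` (`det_parentMatrix_of_wf`).
* Otherwise the indicator of the vertices that never reach `r` is a nonzero vector in the kernel of
  `M_f`, so `det M_f = 0` (`det_parentMatrix_of_not_wf`).

The well-founded parent maps correspond bijectively to the spanning trees, `f` being sent to the
graph with edges `{i, f i}` (`bijOn_parentGraph`).  This settles the principal minors; the other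
minors follow because the rows of the Laplacian sum to zero.
-/

open MvPolynomial Finset

/-- The set of spanning trees of a simple graph `G`: spanning subgraphs of `G`
(encoded as simple graphs on the same vertex set below `G`) that are trees. -/
def spanningTrees {V : Type*} (G : SimpleGraph V) : Set (SimpleGraph V) :=
  {T | T ≤ G ∧ T.IsTree}

section ParentMaps

variable {n : ℕ} (r : Fin (n + 1)) (f : Fin n → Fin (n + 1))

/-- A parent map assigns a vertex `f i` to each non-root vertex `r.succAbove i`.
`ParentRel r f a b` says that `a` is the parent of `b`.  It is well-founded exactly when every
vertex reaches the root `r` by passing to parents repeatedly. -/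
def ParentRel (a b : Fin (n + 1)) : Prop :=
  ∃ i, b = r.succAbove i ∧ a = f i

/-- The graph whose edges join each non-root vertex to its parent. -/
def parentGraph : SimpleGraph (Fin (n + 1)) :=
  SimpleGraph.fromEdgeSet (Set.range fun i => s(r.succAbove i, f i))

/-- The matrix with rows `δ_i - δ_{f i}`, with columns indexed by the non-root vertices. -/
def parentMatrix (R : Type*) [CommRing R] : Matrix (Fin n) (Fin n) R :=
  Matrix.of fun i j => (if i = j then 1 else 0) - (if f i = r.succAbove j then 1 else 0)

variable {r f}

theorem acc_parentRel_root : Acc (ParentRel r f) r :=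
  ⟨_, fun _ ⟨i, hi, _⟩ => absurd hi.symm (Fin.succAbove_ne r i)⟩

theorem acc_parentRel_succAbove (i : Fin n) :
    Acc (ParentRel r f) (r.succAbove i) ↔ Acc (ParentRel r f) (f i) := by
  refine ⟨fun h => h.inv ⟨i, rfl, rfl⟩, fun h => ⟨_, ?_⟩⟩
  rintro _ ⟨j, hj, rfl⟩
  rwa [← Fin.succAbove_right_injective hj]

/-! ### Determinants of parent matrices -/

theorem det_parentMatrix_of_wf {R : Type*} [CommRing R] (h : WellFounded (ParentRel r f)) :
    (parentMatrix r f R).det = 1 := by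
  have : IsWellFounded _ (ParentRel r f) := ⟨h⟩
  -- Off the diagonal, an entry is nonzero only if the column is the parent of the row.
  have rank_lt : ∀ i j, f i = r.succAbove j →
      IsWellFounded.rank (ParentRel r f) (r.succAbove j) <
        IsWellFounded.rank (ParentRel r f) (r.succAbove i) := fun i j hij =>
    IsWellFounded.rank_lt_of_rel ⟨i, rfl, hij.symm⟩
  have tri : (parentMatrix r f R).BlockTriangular
      (fun i => OrderDual.toDual (IsWellFounded.rank (ParentRel r f) (r.succAbove i))) := by
    intro i j hij
    have hij' : IsWellFounded.rank (ParentRel r f) (r.succAbove i) <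
        IsWellFounded.rank (ParentRel r f) (r.succAbove j) := hij
    have h1 : i ≠ j := by rintro rfl; exact lt_irrefl _ hij'
    have h2 : f i ≠ r.succAbove j := fun e => lt_asymm hij' (rank_lt i j e)
    simp [parentMatrix, h1, h2]
  rw [tri.det]
  refine Finset.prod_eq_one fun a _ => ?_
  refine Eq.trans (congrArg Matrix.det ?_) Matrix.det_one
  ext ⟨i, hi⟩ ⟨j, hj⟩
  have h2 : f i ≠ r.succAbove j := fun e =>
    (rank_lt i j e).ne (OrderDual.toDual.injective (hj.trans hi.symm))
  simp [Matrix.toSquareBlock_def, parentMatrix, h2, Matrix.one_apply]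

theorem det_parentMatrix_of_not_wf {R : Type*} [CommRing R] [IsDomain R]
    (h : ¬ WellFounded (ParentRel r f)) : (parentMatrix r f R).det = 0 := by
  classical
  -- The kernel vector is the indicator of the vertices that never reach the root.
  let w : Fin (n + 1) → R := fun v => if Acc (ParentRel r f) v then 0 else 1
  have hw : ∀ i, w (r.succAbove i) = w (f i) := fun i => by
    simp only [w, acc_parentRel_succAbove]
  have hr : w r = 0 := by simp [w, acc_parentRel_root]
  refine Matrix.exists_mulVec_eq_zero_iff.1
    ⟨fun j => w (r.succAbove j), fun h0 => h ⟨fun v => ?_⟩, ?_⟩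
  · by_contra hv
    have hv1 : w v = 1 := if_neg hv
    rcases Fin.eq_self_or_eq_succAbove r v with rfl | ⟨j, rfl⟩
    · exact hv acc_parentRel_root
    · exact one_ne_zero (hv1.symm.trans (congrFun h0 j))
  · ext i
    have key : ∑ j, (if f i = r.succAbove j then w (r.succAbove j) else 0) = w (f i) := by
      have := Fin.sum_univ_succAbove (fun v => if f i = v then w v else 0) r
      simp only [hr, ite_self, zero_add] at this
      rw [← this]; simp
    simp [Matrix.mulVec, dotProduct, parentMatrix, sub_mul, Finset.sum_sub_distrib, key, hw i]

/-! ### Parent maps and spanning trees -/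

theorem parent_ne_self (h : WellFounded (ParentRel r f)) (i : Fin n) : r.succAbove i ≠ f i := by
  intro e
  have : IsWellFounded _ (ParentRel r f) := ⟨h⟩
  exact irrefl_of (ParentRel r f) (f i) ⟨i, e.symm, rfl⟩

theorem edgeSet_parentGraph (h : WellFounded (ParentRel r f)) :
    (parentGraph r f).edgeSet = Set.range fun i => s(r.succAbove i, f i) := by
  rw [parentGraph, SimpleGraph.edgeSet_fromEdgeSet, sdiff_eq_left, Set.disjoint_left]
  rintro _ ⟨i, rfl⟩
  simpa using parent_ne_self h i

theorem adj_parent (h : WellFounded (ParentRel r f)) (i : Fin n) :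
    (parentGraph r f).Adj (r.succAbove i) (f i) := by
  rw [← SimpleGraph.mem_edgeSet, edgeSet_parentGraph h]
  exact ⟨i, rfl⟩

theorem connected_parentGraph (h : WellFounded (ParentRel r f)) :
    (parentGraph r f).Connected := by
  rw [SimpleGraph.connected_iff_exists_forall_reachable]
  refine ⟨r, fun v => ?_⟩
  induction v using h.induction with
  | _ v ih =>
    rcases Fin.eq_self_or_eq_succAbove r v with rfl | ⟨j, rfl⟩
    · exact SimpleGraph.Reachable.refl _
    · exact (ih _ ⟨j, rfl, rfl⟩).trans (adj_parent h j).symm.reachable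

/-- A connected graph on `n + 1` vertices has at least `n` edges, while the parent graph has at most
`n`; so the `n` edges to the parents are distinct. -/
theorem card_edgeSet_parentGraph (h : WellFounded (ParentRel r f)) :
    Nat.card (parentGraph r f).edgeSet = n := by
  have h1 := (connected_parentGraph h).card_vert_le_card_edgeSet_add_one
  have h2 : Nat.card (parentGraph r f).edgeSet ≤ n := by
    rw [edgeSet_parentGraph h]
    simpa using Finite.card_range_le fun i => s(r.succAbove i, f i)
  simp only [Nat.card_eq_fintype_card (α := Fin (n + 1)), Fintype.card_fin] at h1
  omega

theorem injective_parentEdge (h : WellFounded (ParentRel r f)) :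
    Function.Injective fun i => s(r.succAbove i, f i) := by
  have h1 := card_edgeSet_parentGraph h
  rw [edgeSet_parentGraph h] at h1
  rw [← Set.injOn_univ, ← Set.ncard_image_iff, Set.image_univ, ← Nat.card_coe_set_eq, h1]
  simp

theorem isTree_parentGraph (h : WellFounded (ParentRel r f)) : (parentGraph r f).IsTree := by
  rw [SimpleGraph.isTree_iff_connected_and_card]
  exact ⟨connected_parentGraph h, by rw [card_edgeSet_parentGraph h]; simp⟩

/-- If `f` and `g` disagree at a vertex, they also disagree at its `g`-parent, so agreement follows
by well-founded induction along `g`. -/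
theorem parentGraph_injOn {g : Fin n → Fin (n + 1)} (hf : WellFounded (ParentRel r f))
    (hg : WellFounded (ParentRel r g)) (h : parentGraph r f = parentGraph r g) : f = g := by
  suffices H : ∀ v, ∀ i, v = r.succAbove i → f i = g i from funext fun i => H _ i rfl
  intro v
  induction v using hg.induction with
  | _ v ih =>
    rintro i rfl
    have hi : s(r.succAbove i, g i) ∈ Set.range fun i => s(r.succAbove i, f i) := by
      rw [← edgeSet_parentGraph hf, h, SimpleGraph.mem_edgeSet]
      exact adj_parent hg i
    obtain ⟨j, hj⟩ := hi
    rcases Sym2.eq_iff.1 hj with ⟨hji, hfg⟩ | ⟨hji, hfi⟩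
    · rwa [Fin.succAbove_right_injective hji] at hfg
    · -- Now `i` is the `f`-parent of `j`, hence also its `g`-parent, but `j` is the `g`-parent of `i`.
      have hgj : g j = r.succAbove i := (ih _ ⟨i, rfl, rfl⟩ j hji.symm).symm.trans hfi
      have h1 : ParentRel r g (g i) (r.succAbove i) := ⟨i, rfl, rfl⟩
      have h2 : ParentRel r g (r.succAbove i) (g i) := ⟨j, hji.symm, hgj.symm⟩
      have : IsWellFounded _ (ParentRel r g) := ⟨hg⟩
      exact absurd h2 (asymm_of (ParentRel r g) h1)

/-- Every tree arises from a parent map: choose for `f i` a neighbour closer to the root. -/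
theorem exists_parentGraph_eq {T : SimpleGraph (Fin (n + 1))} (hT : T.IsTree) :
    ∃ f, WellFounded (ParentRel r f) ∧ parentGraph r f = T := by
  have step : ∀ i : Fin n, ∃ v, T.Adj (r.succAbove i) v ∧ T.dist v r < T.dist (r.succAbove i) r := by
    intro i
    obtain ⟨p, hp⟩ := hT.connected.exists_walk_length_eq_dist (r.succAbove i) r
    have hnil : ¬ p.Nil := SimpleGraph.Walk.not_nil_of_ne (Fin.succAbove_ne r i)
    refine ⟨p.snd, p.adj_snd hnil, ?_⟩
    have h1 := SimpleGraph.dist_le p.tail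
    have h2 := SimpleGraph.Walk.length_tail_add_one hnil
    omega
  choose f hadj hdist using step
  have wf : WellFounded (ParentRel r f) := by
    refine Subrelation.wf ?_ (InvImage.wf (fun v => T.dist v r) Nat.lt_wfRel.wf)
    rintro _ _ ⟨i, rfl, rfl⟩
    exact hdist i
  refine ⟨f, wf, ?_⟩
  have sub : (parentGraph r f).edgeSet ⊆ T.edgeSet := by
    rw [edgeSet_parentGraph wf]
    rintro _ ⟨i, rfl⟩
    exact hadj i
  have card := (SimpleGraph.isTree_iff_connected_and_card.1 hT).2
  simp only [Nat.card_eq_fintype_card (α := Fin (n + 1)), Fintype.card_fin] at card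
  refine SimpleGraph.edgeSet_injective (Set.eq_of_subset_of_ncard_le sub ?_ (Set.toFinite _))
  have := card_edgeSet_parentGraph wf
  rw [Nat.card_coe_set_eq] at this card
  omega

theorem bijOn_parentGraph : Set.BijOn (parentGraph r) {f | WellFounded (ParentRel r f)}
    (spanningTrees ⊤) :=
  ⟨fun _ h => ⟨le_top, isTree_parentGraph h⟩, fun _ hf _ hg h => parentGraph_injOn hf hg h,
    fun _ hT => exists_parentGraph_eq hT.2⟩

end ParentMaps

/-! ### Minors of the weighted Laplacian -/

/-- The weighted Laplacian of the complete graph with generic edge weights. -/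
noncomputable def laplacian (n : ℕ) :
    Matrix (Fin (n + 1)) (Fin (n + 1)) (MvPolynomial (Sym2 (Fin (n + 1))) ℤ) :=
  Matrix.of fun i j : Fin (n + 1) =>
    if i = j then
      ∑ k ∈ (univ : Finset (Fin (n + 1))).erase i,
        (X s(i, k) : MvPolynomial (Sym2 (Fin (n + 1))) ℤ)
    else -X s(i, j)

theorem laplacian_row_sum {n : ℕ} (i : Fin (n + 1)) : ∑ j, laplacian n i j = 0 := by
  rw [← Finset.add_sum_erase _ _ (Finset.mem_univ i)]
  have : ∑ j ∈ univ.erase i, laplacian n i j = ∑ j ∈ univ.erase i, -X s(i, j) :=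
    Finset.sum_congr rfl fun j hj => by simp [laplacian, (Finset.ne_of_mem_erase hj).symm]
  rw [this]
  simp [laplacian]

theorem laplacian_submatrix_apply {n : ℕ} (r : Fin (n + 1)) (i j : Fin n) :
    (laplacian n).submatrix r.succAbove r.succAbove i j = ∑ k, X s(r.succAbove i, k) *
      ((if i = j then 1 else 0) - (if k = r.succAbove j then 1 else 0)) := by
  simp only [mul_sub, Finset.sum_sub_distrib, mul_ite, mul_one, mul_zero, Finset.sum_ite_eq',
    Finset.mem_univ, if_true]
  by_cases h : i = j
  · subst h
    simp [laplacian, Finset.sum_erase_eq_sub]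
  · simp [laplacian, h]

theorem det_laplacian_submatrix_eq_sum {n : ℕ} (r : Fin (n + 1)) :
    ((laplacian n).submatrix r.succAbove r.succAbove).det =
      ∑ f : Fin n → Fin (n + 1), (∏ i, X s(r.succAbove i, f i)) * (parentMatrix r f _).det := by
  have h : (laplacian n).submatrix r.succAbove r.succAbove =
      fun i => ∑ k, fun j => X s(r.succAbove i, k) *
        ((if i = j then 1 else 0) - (if k = r.succAbove j then 1 else 0)) := by
    ext1 i j
    rw [laplacian_submatrix_apply, Finset.sum_apply]
  rw [h]
  refine (MultilinearMap.map_sum Matrix.detRowAlternating.toMultilinearMap _).trans ?_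
  exact Finset.sum_congr rfl fun f _ => Matrix.det_mul_column _ (parentMatrix r f _)

theorem det_laplacian_principal {n : ℕ} (r : Fin (n + 1)) :
    (∑ᶠ T ∈ spanningTrees (⊤ : SimpleGraph (Fin (n + 1))),
        ∏ᶠ e ∈ T.edgeSet, (X e : MvPolynomial (Sym2 (Fin (n + 1))) ℤ))
      = ((laplacian n).submatrix r.succAbove r.succAbove).det := by
  classical
  rw [det_laplacian_submatrix_eq_sum, ← finsum_mem_eq_of_bijOn (parentGraph r)
    (f := fun f => ∏ i, X s(r.succAbove i, f i)) bijOn_parentGraph,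
    finsum_mem_eq_finite_toFinset_sum _ (Set.toFinite _)]
  · refine Finset.sum_subset_zero_on_sdiff (Finset.subset_univ _) (fun f hf => ?_) fun f hf => ?_
    · have hf' : ¬ WellFounded (ParentRel r f) := by simpa using hf
      rw [det_parentMatrix_of_not_wf hf', mul_zero]
    · have hf' : WellFounded (ParentRel r f) := by simpa using hf
      rw [det_parentMatrix_of_wf hf', mul_one]
  · intro f hf
    rw [edgeSet_parentGraph hf, finprod_mem_range (injective_parentEdge hf),
      finprod_eq_prod_of_fintype]

/-- Kirchhoff's Matrix-Tree theorem for the complete graph on `n + 1 ≥ 2` vertices,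
with a generic edge variable `e_{ij} = X s(i,j)` for each edge `{i,j}`:
the spanning tree generating polynomial equals `(-1)^{r+s}` times the minor of the
weighted Laplacian obtained by deleting row `r` and column `s`. -/
theorem kirchhoff_matrix_tree (n : ℕ) (hn : 1 ≤ n) (r s : Fin (n + 1)) :
    (∑ᶠ T ∈ spanningTrees (⊤ : SimpleGraph (Fin (n + 1))),
        ∏ᶠ e ∈ T.edgeSet, (X e : MvPolynomial (Sym2 (Fin (n + 1))) ℤ))
      = (-1) ^ ((r : ℕ) + (s : ℕ)) *
          Matrix.det
            ((Matrix.of fun i j : Fin (n + 1) =>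
                if i = j then
                  ∑ k ∈ (univ : Finset (Fin (n + 1))).erase i,
                    (X s(i, k) : MvPolynomial (Sym2 (Fin (n + 1))) ℤ)
                else -X s(i, j)).submatrix r.succAbove s.succAbove) := by
  change _ = (-1) ^ ((r : ℕ) + (s : ℕ)) * ((laplacian n).submatrix r.succAbove s.succAbove).det
  rw [det_laplacian_principal r]
  -- Apply the column-deletion lemma to the `n × (n + 1)` matrix left after deleting row `r`.
  have h := Matrix.submatrix_succAbove_det_eq_negOnePow_submatrix_succAbove_det'
    ((laplacian n).submatrix r.succAbove id) (fun i => laplacian_row_sum _) r s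
  simp only [Matrix.submatrix_submatrix, Function.id_comp, Function.comp_id] at h
  rw [h, Int.negOnePow_sub, ← Int.negOnePow_add, ← Nat.cast_add, Units.smul_def, zsmul_eq_mul,
    Int.cast_negOnePow_natCast]
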